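/- Let ν ∈ (0,1/2]. For R ∈ (0,π) define Λ(R) as the infimum, over all smooth not identically zero functions u : (0,R) × ℝ → ℂ that are 2π-periodic in the second variable θ, vanish for all r in a neighborhood of R, and have finite magnetic energy, of the quotient Q[u] = (∫₀^{2π} ∫₀^R (|∂_r u(r,θ)|² + |∂_θ u(r,θ) − iν u(r,θ)|²/sin²(r)) sin(r) dr dθ) / (∫₀^{2π} ∫₀^R |u(r,θ)|² sin(r) dr dθ). Then Λ(R) ≥ ν(ν+1) for every R ∈ (0,π), and Λ(R) → ν(ν+1) as R → π⁻. -/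

import Mathlib

open MeasureTheory Real Set Filter

/-- The integrand of the magnetic energy in geodesic polar coordinates `(r, θ)`
on the round sphere, for the Aharonov–Bohm potential `A = ν dθ`. -/
noncomputable def magEnergyIntegrand (ν : ℝ) (u : ℝ → ℝ → ℂ) (p : ℝ × ℝ) : ℝ :=
  (‖deriv (fun s => u s p.2) p.1‖ ^ 2
      + ‖deriv (fun t => u p.1 t) p.2 - Complex.I * (ν : ℂ) * u p.1 p.2‖ ^ 2
          / Real.sin p.1 ^ 2)
    * Real.sin p.1

/-- Admissible functions on the polar coordinate rectangle `(0, R) × ℝ`: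
smooth, `2π`-periodic in `θ`, not identically zero, with finite magnetic energy
(and finite `L²`-norm). -/
def MagAdmissible (R ν : ℝ) (u : ℝ → ℝ → ℂ) : Prop :=
  ContDiffOn ℝ (⊤ : ℕ∞) (Function.uncurry u) (Ioo 0 R ×ˢ (univ : Set ℝ)) ∧
  (∀ r θ, u r (θ + 2 * π) = u r θ) ∧
  (¬ ∀ r ∈ Ioo (0:ℝ) R, ∀ θ : ℝ, u r θ = 0) ∧
  IntegrableOn (magEnergyIntegrand ν u) (Ioo 0 R ×ˢ Ioo 0 (2 * π)) ∧
  IntegrableOn (fun p : ℝ × ℝ => ‖u p.1 p.2‖ ^ 2 * Real.sin p.1)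
    (Ioo 0 R ×ˢ Ioo 0 (2 * π))

/-- The magnetic Rayleigh quotient in polar coordinates. -/
noncomputable def magQuot (R ν : ℝ) (u : ℝ → ℝ → ℂ) : ℝ :=
  (∫ p in Ioo (0:ℝ) R ×ˢ Ioo (0:ℝ) (2 * π), magEnergyIntegrand ν u p) /
    ∫ p in Ioo (0:ℝ) R ×ˢ Ioo (0:ℝ) (2 * π), ‖u p.1 p.2‖ ^ 2 * Real.sin p.1

/-- Admissible functions for the Dirichlet problem on the geodesic disk of radius `R`:
magnetically admissible and vanishing for all `r` in a neighborhood of `R`. -/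
def DirAdmissible (R ν : ℝ) (u : ℝ → ℝ → ℂ) : Prop :=
  MagAdmissible R ν u ∧ ∃ ε > (0:ℝ), ∀ r : ℝ, R - ε < r → ∀ θ : ℝ, u r θ = 0

/-- `Λ(R)`: the first magnetic Dirichlet eigenvalue of the geodesic disk of
radius `R` centered at the pole, expressed variationally. -/
noncomputable def Lam (ν R : ℝ) : ℝ :=
  sInf { q | ∃ u : ℝ → ℝ → ℂ, DirAdmissible R ν u ∧ q = magQuot R ν u }

/-!
On each circle `r = const` the magnetic derivative `∂_θ - iν` acts on the Fourier modes by
`i(n - ν)`, so for `|ν| ≤ 1/2` the angular energy of `u` is at least `ν² ∫ |u|² / sin r`. What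
remains is, for almost every `θ`, a radial problem with ground state `sin r ^ ν`: integrating by
parts,

  `∫ |v'|² sin + ν² ∫ |v|² / sin = ν (ν + 1) ∫ |v|² sin + ∫ |sin ^ ν (v / sin ^ ν)'|² sin`,

where the boundary term at the pole vanishes because `∫ |v|² / sin` is finite. This gives the
lower bound. Applied to `v = χ sin ^ ν`, with a cutoff `χ` descending from `1` to `0` at distance
comparable to `π - R` from the antipode, the same identity bounds the quotient from above: the
last integral is `∫ |χ'|² sin ^ (2ν + 1) = O((π - R) ^ (2ν))`.
-/

open scoped Topology

section OneVariable

variable {a b : ℝ}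

lemma mapClusterPt_zero_of_integrableOn_inv_smul {E : Type*} [NormedAddCommGroup E]
    [NormedSpace ℝ E] {f : ℝ → E} (hab : a < b)
    (hf : IntegrableOn (fun x => (x - a)⁻¹ • f x) (Ioo a b)) :
    MapClusterPt 0 (𝓝[>] a) f := by
  rw [Metric.nhds_basis_ball.mapClusterPt_iff_frequently]
  intro η hη hfar
  obtain ⟨c, hac, hc⟩ := mem_nhdsGT_iff_exists_Ioo_subset.1 hfar
  have ham : a < min c b := lt_min hac hab
  have hinv : IntegrableOn (fun x => (x - a)⁻¹) (Ioo a (min c b)) := by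
    refine ((hf.mono_set (Ioo_subset_Ioo_right (min_le_right c b))).norm.const_mul η⁻¹).mono'
      (by fun_prop) ?_
    filter_upwards [ae_restrict_mem measurableSet_Ioo] with x hx
    have hηx : η ≤ ‖f x‖ := by
      simpa using hc ⟨hx.1, hx.2.trans_le (min_le_left c b)⟩
    rw [norm_smul, mul_left_comm]
    exact le_mul_of_one_le_right (norm_nonneg _) ((one_le_inv_mul₀ hη).2 hηx)
  rw [← intervalIntegrable_iff_integrableOn_Ioo_of_le ham.le,
    intervalIntegrable_sub_inv_iff] at hinv
  exact hinv.elim ham.ne fun h => h left_mem_uIcc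

lemma integral_Ioo_deriv_eq_sub_of_mapClusterPt {E : Type*} [NormedAddCommGroup E]
    [NormedSpace ℝ E] [CompleteSpace E] {f f' : ℝ → E} {c : E} (hab : a < b)
    (hcont : ContinuousOn f (Ioc a b)) (hderiv : ∀ x ∈ Ioo a b, HasDerivAt f (f' x) x)
    (hintegral : IntegrableOn f' (Ioo a b)) (hc : MapClusterPt c (𝓝[>] a) f) :
    ∫ x in Ioo a b, f' x = f b - c := by
  have hintIcc : IntegrableOn f' (Icc a b) := by
    rwa [integrableOn_Icc_iff_integrableOn_Ioo]
  have hprim : Tendsto (fun x => ∫ t in x..b, f' t) (𝓝[>] a) (𝓝 (∫ t in a..b, f' t)) := by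
    have h := intervalIntegral.continuousOn_primitive_interval_left
      (uIcc_of_le hab.le ▸ hintIcc) a left_mem_uIcc
    rw [uIcc_of_le hab.le] at h
    exact h.mono_left (nhdsWithin_Ioc_eq_nhdsGT hab ▸ nhdsWithin_mono a Ioc_subset_Icc_self)
  have hftc : ∀ᶠ x in 𝓝[>] a, f b - ∫ t in x..b, f' t = f x := by
    filter_upwards [Ioo_mem_nhdsGT hab] with x hx
    rw [intervalIntegral.integral_eq_sub_of_hasDerivAt_of_le hx.2.le
      (hcont.mono fun y hy => ⟨hx.1.trans_le hy.1, hy.2⟩)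
      (fun y hy => hderiv y ⟨hx.1.trans hy.1, hy.2⟩)
      ((intervalIntegrable_iff_integrableOn_Icc_of_le hx.2.le).2
        (hintIcc.mono_set (Icc_subset_Icc_left hx.1.le)))]
    abel
  have hlim : Tendsto f (𝓝[>] a) (𝓝 (f b - ∫ t in a..b, f' t)) :=
    (tendsto_const_nhds.sub hprim).congr' hftc
  have huniq : c = f b - ∫ t in a..b, f' t := eq_of_nhds_neBot (ClusterPt.mono hc hlim)
  rw [huniq, sub_sub_cancel, intervalIntegral.integral_of_le hab.le, integral_Ioc_eq_integral_Ioo]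

end OneVariable

section RadialProfiles

variable {E : Type*} [NormedAddCommGroup E]

/-- The density of the squared `L²`-norm of a radial profile `v` on the unit sphere. -/
noncomputable def massDensity (v : ℝ → E) (r : ℝ) : ℝ := ‖v r‖ ^ 2 * sin r

/-- The density of the centrifugal potential energy of a radial profile `v` on the unit sphere,
for unit angular momentum. It is `0` at the poles, where `sin r = 0`. -/
noncomputable def centrifugalDensity (v : ℝ → E) (r : ℝ) : ℝ := ‖v r‖ ^ 2 / sin r

/-- The boundary term of the integration by parts in the ground state representation. -/
noncomputable def boundaryTerm (ν : ℝ) (v : ℝ → E) (r : ℝ) : ℝ := ν * (cos r * ‖v r‖ ^ 2)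

variable [NormedSpace ℝ E]

/-- The density of the radial kinetic energy of a profile `v` on the unit sphere. -/
noncomputable def kineticDensity (v : ℝ → E) (r : ℝ) : ℝ := ‖deriv v r‖ ^ 2 * sin r

/-- The density of the energy which a profile `v` has in excess of the ground state `sin r ^ ν`:
the squared norm of `sin r ^ ν * (v / sin ^ ν)'`, weighted by `sin r`. -/
noncomputable def excessDensity (ν : ℝ) (v : ℝ → E) (r : ℝ) : ℝ :=
  ‖sin r • deriv v r - (ν * cos r) • v r‖ ^ 2 / sin r

/-- Radial profiles of finite energy on the geodesic disk of radius `R` that vanish on the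
boundary circle; no condition is imposed at the pole `r = 0`. -/
structure RadialFormDomain (R : ℝ) (v : ℝ → E) : Prop where
  continuousOn : ContinuousOn v (Ioc 0 R)
  differentiableAt : ∀ r ∈ Ioo 0 R, DifferentiableAt ℝ v r
  eq_zero : v R = 0
  integrableOn_mass : IntegrableOn (massDensity v) (Ioo 0 R)
  integrableOn_centrifugal : IntegrableOn (centrifugalDensity v) (Ioo 0 R)
  integrableOn_kinetic : IntegrableOn (kineticDensity v) (Ioo 0 R)

variable {ν R r : ℝ} {v : ℝ → E}

lemma excessDensity_le (hr : 0 ≤ sin r) :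
    excessDensity ν v r ≤ 2 * (kineticDensity v r + ν ^ 2 * centrifugalDensity v r) := by
  rcases hr.eq_or_lt with hr | hr
  · simp [excessDensity, kineticDensity, centrifugalDensity, ← hr]
  have hνcos : ‖(ν * cos r) • v r‖ ^ 2 ≤ ν ^ 2 * ‖v r‖ ^ 2 := by
    rw [norm_smul, norm_eq_abs, mul_pow, sq_abs, mul_pow]
    gcongr
    exact mul_le_of_le_one_right (sq_nonneg ν) (cos_sq_le_one r)
  have hsq : ‖sin r • deriv v r - (ν * cos r) • v r‖ ^ 2 ≤
      2 * (sin r ^ 2 * ‖deriv v r‖ ^ 2 + ν ^ 2 * ‖v r‖ ^ 2) :=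
    calc _ ≤ (‖sin r • deriv v r‖ + ‖(ν * cos r) • v r‖) ^ 2 := by gcongr; exact norm_sub_le _ _
      _ ≤ 2 * (‖sin r • deriv v r‖ ^ 2 + ‖(ν * cos r) • v r‖ ^ 2) := add_sq_le
      _ ≤ _ := by
        rw [norm_smul (sin r), norm_eq_abs, mul_pow, sq_abs]
        gcongr
  calc excessDensity ν v r
      ≤ 2 * (sin r ^ 2 * ‖deriv v r‖ ^ 2 + ν ^ 2 * ‖v r‖ ^ 2) / sin r := by
        unfold excessDensity; gcongr
    _ = _ := by unfold kineticDensity centrifugalDensity; field_simp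

lemma excessDensity_nonneg (hr : 0 ≤ sin r) : 0 ≤ excessDensity ν v r :=
  div_nonneg (sq_nonneg _) hr

namespace RadialFormDomain

lemma integrableOn_excess [CompleteSpace E] (hR : R ≤ π) (hv : RadialFormDomain R v) :
    IntegrableOn (excessDensity ν v) (Ioo 0 R) := by
  have hmeas : AEStronglyMeasurable v (volume.restrict (Ioo 0 R)) :=
    (hv.continuousOn.mono Ioo_subset_Ioc_self).aestronglyMeasurable measurableSet_Ioo
  have hderiv := aestronglyMeasurable_deriv v (volume.restrict (Ioo 0 R))
  have hnum : AEStronglyMeasurable (fun r => ‖sin r • deriv v r - (ν * cos r) • v r‖ ^ 2)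
      (volume.restrict (Ioo 0 R)) := by
    fun_prop
  refine ((hv.integrableOn_kinetic.add (hv.integrableOn_centrifugal.const_mul (ν ^ 2))).const_mul
    2).mono' (hnum.div₀ (by fun_prop)) ?_
  filter_upwards [ae_restrict_mem measurableSet_Ioo] with r hr
  have hs := sin_pos_of_pos_of_lt_pi hr.1 (hr.2.trans_le hR)
  rw [norm_of_nonneg (excessDensity_nonneg hs.le)]
  exact excessDensity_le hs.le

-- Since `1 / r` is not integrable at the pole, finite centrifugal energy kills the boundary term.
lemma mapClusterPt_boundaryTerm (hR : R ∈ Ioo 0 π) (hv : RadialFormDomain R v) :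
    MapClusterPt 0 (𝓝[>] 0) (boundaryTerm ν v) := by
  refine mapClusterPt_zero_of_integrableOn_inv_smul hR.1 ?_
  refine (hv.integrableOn_centrifugal.mul_continuousOn_of_subset
    (g' := fun r => ν * cos r * sinc r) (by fun_prop) measurableSet_Ioo isCompact_Icc
    Ioo_subset_Icc_self).congr_fun (fun r hr => ?_) measurableSet_Ioo
  have hs := sin_pos_of_pos_of_lt_pi hr.1 (hr.2.trans hR.2)
  simp only [centrifugalDensity, boundaryTerm, sinc_of_ne_zero hr.1.ne', sub_zero, smul_eq_mul]
  field_simp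

end RadialFormDomain

end RadialProfiles

section GroundState

variable {E : Type*} [NormedAddCommGroup E] [InnerProductSpace ℝ E] {ν R r : ℝ} {v : ℝ → E}

lemma hasDerivAt_boundaryTerm (hv : DifferentiableAt ℝ v r) :
    HasDerivAt (boundaryTerm ν v)
      (ν * (-sin r * ‖v r‖ ^ 2 + cos r * (2 * inner ℝ (v r) (deriv v r)))) r :=
  ((hasDerivAt_cos r).mul hv.hasDerivAt.norm_sq).const_mul ν

lemma kinetic_add_centrifugal_eq (hr : sin r ≠ 0) (hv : DifferentiableAt ℝ v r) :
    kineticDensity v r + ν ^ 2 * centrifugalDensity v r =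
      ν * (ν + 1) * massDensity v r + deriv (boundaryTerm ν v) r + excessDensity ν v r := by
  have hsq : ‖sin r • deriv v r - (ν * cos r) • v r‖ ^ 2 = sin r ^ 2 * ‖deriv v r‖ ^ 2 -
      2 * (ν * cos r * sin r * inner ℝ (v r) (deriv v r)) +
        ν ^ 2 * (1 - sin r ^ 2) * ‖v r‖ ^ 2 := by
    rw [norm_sub_sq_real, real_inner_smul_left, real_inner_smul_right, norm_smul, norm_smul,
      mul_pow, mul_pow, norm_eq_abs, norm_eq_abs, sq_abs, sq_abs, mul_pow, cos_sq',
      real_inner_comm]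
    ring
  rw [(hasDerivAt_boundaryTerm hv).deriv, kineticDensity, centrifugalDensity, massDensity,
    excessDensity, hsq]
  field_simp
  ring

namespace RadialFormDomain

variable [CompleteSpace E]

lemma integrableOn_deriv_boundaryTerm (hR : R ≤ π) (hv : RadialFormDomain R v) :
    IntegrableOn (deriv (boundaryTerm ν v)) (Ioo 0 R) := by
  refine (((hv.integrableOn_kinetic.add (hv.integrableOn_centrifugal.const_mul (ν ^ 2))).sub
    (hv.integrableOn_mass.const_mul (ν * (ν + 1)))).sub
    (hv.integrableOn_excess (ν := ν) hR)).congr_fun (fun r hr => ?_) measurableSet_Ioo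
  have hs := sin_pos_of_pos_of_lt_pi hr.1 (hr.2.trans_le hR)
  have hid := kinetic_add_centrifugal_eq (ν := ν) hs.ne' (hv.differentiableAt r hr)
  simp only [Pi.add_apply, Pi.sub_apply]
  linarith

lemma integral_deriv_boundaryTerm (hR : R ∈ Ioo 0 π) (hv : RadialFormDomain R v) :
    ∫ r in Ioo 0 R, deriv (boundaryTerm ν v) r = 0 := by
  have hcont : ContinuousOn (boundaryTerm ν v) (Ioc 0 R) := by
    have := hv.continuousOn
    unfold boundaryTerm
    fun_prop
  rw [integral_Ioo_deriv_eq_sub_of_mapClusterPt hR.1 hcont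
    (fun r hr => (hasDerivAt_boundaryTerm (hv.differentiableAt r hr)).differentiableAt.hasDerivAt)
    (hv.integrableOn_deriv_boundaryTerm hR.2.le) (hv.mapClusterPt_boundaryTerm hR)]
  simp [boundaryTerm, hv.eq_zero]

theorem groundState_representation (ν : ℝ) (hR : R ∈ Ioo 0 π) (hv : RadialFormDomain R v) :
    (∫ r in Ioo 0 R, kineticDensity v r) + ν ^ 2 * ∫ r in Ioo 0 R, centrifugalDensity v r =
      ν * (ν + 1) * (∫ r in Ioo 0 R, massDensity v r) + ∫ r in Ioo 0 R, excessDensity ν v r := by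
  have hB := hv.integrableOn_deriv_boundaryTerm (ν := ν) hR.2.le
  have hM := hv.integrableOn_mass.const_mul (ν * (ν + 1))
  have hMB : IntegrableOn (fun r => ν * (ν + 1) * massDensity v r + deriv (boundaryTerm ν v) r)
      (Ioo 0 R) := hM.add hB
  calc _ = ∫ r in Ioo 0 R, (kineticDensity v r + ν ^ 2 * centrifugalDensity v r) := by
        rw [integral_add hv.integrableOn_kinetic (hv.integrableOn_centrifugal.const_mul _),
          integral_const_mul]
    _ = ∫ r in Ioo 0 R, (ν * (ν + 1) * massDensity v r + deriv (boundaryTerm ν v) r +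
          excessDensity ν v r) :=
        setIntegral_congr_fun measurableSet_Ioo fun r hr => kinetic_add_centrifugal_eq
          (sin_pos_of_pos_of_lt_pi hr.1 (hr.2.trans hR.2)).ne' (hv.differentiableAt r hr)
    _ = _ := by
        rw [integral_add hMB (hv.integrableOn_excess hR.2.le), integral_add hM hB,
          integral_const_mul, hv.integral_deriv_boundaryTerm hR, add_zero]

theorem mul_integral_mass_le (ν : ℝ) (hR : R ∈ Ioo 0 π) (hv : RadialFormDomain R v) :
    ν * (ν + 1) * ∫ r in Ioo 0 R, massDensity v r ≤
      (∫ r in Ioo 0 R, kineticDensity v r) + ν ^ 2 * ∫ r in Ioo 0 R, centrifugalDensity v r := by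
  rw [hv.groundState_representation ν hR]
  exact le_add_of_nonneg_right (setIntegral_nonneg measurableSet_Ioo fun r hr =>
    excessDensity_nonneg (sin_pos_of_pos_of_lt_pi hr.1 (hr.2.trans hR.2)).le)

end RadialFormDomain

end GroundState

section MagneticWirtinger

variable {a b : ℝ} {f f' : ℝ → ℂ}

lemma memLp_Ioc_of_continuousOn_Icc {E : Type*} [NormedAddCommGroup E] {g : ℝ → E}
    {p : ENNReal} (hg : ContinuousOn g (Icc a b)) : MemLp g p (volume.restrict (Ioc a b)) := by
  obtain ⟨C, hC⟩ := isCompact_Icc.exists_bound_of_continuousOn hg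
  refine .of_bound ((hg.mono Ioc_subset_Icc_self).aestronglyMeasurable measurableSet_Ioc) C ?_
  filter_upwards [ae_restrict_mem measurableSet_Ioc] with x hx using hC x (Ioc_subset_Icc_self hx)

lemma fourierCoeffOn_sub {g : ℝ → ℂ} (hab : a < b) (hf : IntervalIntegrable f volume a b)
    (hg : IntervalIntegrable g volume a b) (n : ℤ) :
    fourierCoeffOn hab (fun x => f x - g x) n =
      fourierCoeffOn hab f n - fourierCoeffOn hab g n := by
  have hchar : Continuous fun x : ℝ => fourier (-n) (x : AddCircle (b - a)) := by fun_prop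
  simp only [fourierCoeffOn_eq_integral, smul_sub]
  rw [intervalIntegral.integral_sub (hf.continuousOn_smul hchar.continuousOn)
    (hg.continuousOn_smul hchar.continuousOn), smul_sub]

lemma fourierCoeffOn_deriv_of_eq_endpoints (hab : a < b)
    (hf : ∀ x ∈ uIcc a b, HasDerivAt f (f' x) x) (hf' : IntervalIntegrable f' volume a b)
    (hper : f b = f a) (n : ℤ) :
    fourierCoeffOn hab f' n =
      Complex.I * (2 * π * n / (b - a) : ℝ) * fourierCoeffOn hab f n := by
  rcases eq_or_ne n 0 with rfl | hn
  · have hintegral : ∫ x in a..b, f' x = 0 := by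
      rw [intervalIntegral.integral_eq_sub_of_hasDerivAt hf hf', hper, sub_self]
    simp [fourierCoeffOn_eq_integral, hintegral]
  · have hba : (b - a : ℂ) ≠ 0 := by exact_mod_cast sub_ne_zero.2 hab.ne'
    have hπ : (π : ℂ) ≠ 0 := by exact_mod_cast pi_ne_zero
    rw [fourierCoeffOn_of_hasDerivAt hab hn hf hf', hper]
    push_cast
    field_simp
    simp

lemma fourierCoeffOn_magneticDeriv (hab : a < b) (hf : ∀ x ∈ uIcc a b, HasDerivAt f (f' x) x)
    (hf' : IntervalIntegrable f' volume a b) (hper : f b = f a) (ν : ℝ) (n : ℤ) :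
    fourierCoeffOn hab (fun x => f' x - Complex.I * ν * f x) n =
      Complex.I * (2 * π * n / (b - a) - ν : ℝ) * fourierCoeffOn hab f n := by
  have hfi : IntervalIntegrable f volume a b := (HasDerivAt.continuousOn hf).intervalIntegrable
  rw [fourierCoeffOn_sub hab hf' (hfi.const_mul _), fourierCoeffOn.const_mul,
    fourierCoeffOn_deriv_of_eq_endpoints hab hf hf' hper]
  push_cast
  ring

theorem magnetic_wirtinger {ν κ : ℝ} (hab : a < b) (hf : ∀ x ∈ uIcc a b, HasDerivAt f (f' x) x)
    (hf' : MemLp f' 2 (volume.restrict (Ioc a b))) (hper : f b = f a)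
    (hκ : ∀ n : ℤ, κ ≤ (2 * π * n / (b - a) - ν) ^ 2) :
    κ * ∫ x in a..b, ‖f x‖ ^ 2 ≤ ∫ x in a..b, ‖f' x - Complex.I * ν * f x‖ ^ 2 := by
  have hfL2 : MemLp f 2 (volume.restrict (Ioc a b)) :=
    memLp_Ioc_of_continuousOn_Icc (uIcc_of_le hab.le ▸ HasDerivAt.continuousOn hf)
  have hf'int : IntervalIntegrable f' volume a b :=
    (intervalIntegrable_iff_integrableOn_Ioc_of_le hab.le).2 (hf'.integrable one_le_two)
  have hcoeff : ∀ n : ℤ, κ * ‖fourierCoeffOn hab f n‖ ^ 2 ≤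
      ‖fourierCoeffOn hab (fun x => f' x - Complex.I * ν * f x) n‖ ^ 2 := fun n => by
    rw [fourierCoeffOn_magneticDeriv hab hf hf'int hper, norm_mul, norm_mul, Complex.norm_I,
      one_mul, Complex.norm_real, mul_pow, norm_eq_abs, sq_abs]
    gcongr
    exact hκ n
  have hparseval := hasSum_le hcoeff ((hasSum_sq_fourierCoeffOn hab hfL2).mul_left κ)
    (hasSum_sq_fourierCoeffOn hab (hf'.sub (hfL2.const_mul (Complex.I * ν))))
  rw [smul_eq_mul, smul_eq_mul, mul_left_comm] at hparseval
  exact le_of_mul_le_mul_left hparseval (inv_pos.2 (sub_pos.2 hab))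

lemma sq_le_intCast_sub_sq {ν : ℝ} (hν : |ν| ≤ 1 / 2) (n : ℤ) : ν ^ 2 ≤ (n - ν) ^ 2 := by
  obtain ⟨hlow, hup⟩ := abs_le.1 hν
  rcases lt_trichotomy n 0 with hn | rfl | hn
  · have : (n : ℝ) ≤ -1 := by exact_mod_cast Int.le_sub_one_of_lt hn
    nlinarith
  · simp
  · have : (1 : ℝ) ≤ n := by exact_mod_cast hn
    nlinarith

theorem magnetic_wirtinger_circle {ν : ℝ} (hν : |ν| ≤ 1 / 2) (hf : ∀ x, HasDerivAt f (f' x) x)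
    (hf' : Continuous f') (hper : f (2 * π) = f 0) :
    ν ^ 2 * ∫ x in Ioo 0 (2 * π), ‖f x‖ ^ 2 ≤
      ∫ x in Ioo 0 (2 * π), ‖f' x - Complex.I * ν * f x‖ ^ 2 := by
  have hle := magnetic_wirtinger two_pi_pos (fun x _ => hf x)
    (memLp_Ioc_of_continuousOn_Icc hf'.continuousOn) hper (ν := ν) (κ := ν ^ 2) fun n => by
      rw [sub_zero, mul_div_cancel_left₀ _ two_pi_pos.ne']
      exact sq_le_intCast_sub_sq hν n
  simpa only [intervalIntegral.integral_of_le two_pi_pos.le, integral_Ioc_eq_integral_Ioo] using hle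

end MagneticWirtinger

section Slices

variable {α β : Type*} [MeasurableSpace α] [MeasurableSpace β] {μ : Measure α} {ρ : Measure β}
  [SFinite ρ] {f g : α × β → ℝ}

lemma integrable_prod_of_integral_slice_le (hf : AEStronglyMeasurable f (μ.prod ρ))
    (hf0 : ∀ᵐ x ∂μ, ∀ y, 0 ≤ f (x, y)) (hfx : ∀ᵐ x ∂μ, Integrable (fun y => f (x, y)) ρ)
    (hg : Integrable g (μ.prod ρ)) (hle : ∀ᵐ x ∂μ, ∫ y, f (x, y) ∂ρ ≤ ∫ y, g (x, y) ∂ρ) :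
    Integrable f (μ.prod ρ) := by
  refine (integrable_prod_iff hf).2
    ⟨hfx, hg.integral_prod_left.mono' hf.norm.integral_prod_right' ?_⟩
  filter_upwards [hf0, hle] with x hx hlex
  simpa only [norm_of_nonneg (hx _), norm_of_nonneg (integral_nonneg hx)] using hlex

lemma integral_prod_mono_of_integral_slice_le [SFinite μ] (hf : Integrable f (μ.prod ρ))
    (hg : Integrable g (μ.prod ρ)) (hle : ∀ᵐ x ∂μ, ∫ y, f (x, y) ∂ρ ≤ ∫ y, g (x, y) ∂ρ) :
    ∫ z, f z ∂μ.prod ρ ≤ ∫ z, g z ∂μ.prod ρ := by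
  rw [integral_prod _ hf, integral_prod _ hg]
  exact integral_mono_ae hf.integral_prod_left hg.integral_prod_left hle

end Slices

section PartialDerivatives

variable {F : Type*} [NormedAddCommGroup F] [NormedSpace ℝ F] {u : ℝ → ℝ → F} {Ω : Set (ℝ × ℝ)}

lemma hasDerivAt_fst_of_contDiffOn_uncurry (hΩ : IsOpen Ω)
    (hu : ContDiffOn ℝ 1 (Function.uncurry u) Ω) {p : ℝ × ℝ} (hp : p ∈ Ω) :
    HasDerivAt (fun s => u s p.2) (fderiv ℝ (Function.uncurry u) p (1, 0)) p.1 := by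
  have hdiff : DifferentiableAt ℝ (Function.uncurry u) p :=
    (hu.differentiableOn one_ne_zero).differentiableAt (hΩ.mem_nhds hp)
  have hcomp := hdiff.hasFDerivAt.comp_hasDerivAt p.1
    ((hasDerivAt_id p.1).prodMk (hasDerivAt_const p.1 p.2))
  exact hcomp

lemma hasDerivAt_snd_of_contDiffOn_uncurry (hΩ : IsOpen Ω)
    (hu : ContDiffOn ℝ 1 (Function.uncurry u) Ω) {p : ℝ × ℝ} (hp : p ∈ Ω) :
    HasDerivAt (fun t => u p.1 t) (fderiv ℝ (Function.uncurry u) p (0, 1)) p.2 := by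
  have hdiff : DifferentiableAt ℝ (Function.uncurry u) p :=
    (hu.differentiableOn one_ne_zero).differentiableAt (hΩ.mem_nhds hp)
  have hcomp := hdiff.hasFDerivAt.comp_hasDerivAt p.2
    ((hasDerivAt_const p.2 p.1).prodMk (hasDerivAt_id p.2))
  exact hcomp

lemma continuousOn_deriv_fst_of_contDiffOn_uncurry (hΩ : IsOpen Ω)
    (hu : ContDiffOn ℝ 1 (Function.uncurry u) Ω) :
    ContinuousOn (fun p : ℝ × ℝ => deriv (fun s => u s p.2) p.1) Ω :=
  ((hu.continuousOn_fderiv_of_isOpen hΩ le_rfl).clm_apply continuousOn_const).congr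
    fun _ hp => (hasDerivAt_fst_of_contDiffOn_uncurry hΩ hu hp).deriv

lemma continuousOn_deriv_snd_of_contDiffOn_uncurry (hΩ : IsOpen Ω)
    (hu : ContDiffOn ℝ 1 (Function.uncurry u) Ω) :
    ContinuousOn (fun p : ℝ × ℝ => deriv (fun t => u p.1 t) p.2) Ω :=
  ((hu.continuousOn_fderiv_of_isOpen hΩ le_rfl).clm_apply continuousOn_const).congr
    fun _ hp => (hasDerivAt_snd_of_contDiffOn_uncurry hΩ hu hp).deriv

end PartialDerivatives

section PolarRectangle

/-- The coordinate domain of the disk of radius `R` slit along the ray `θ = 0`. -/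
abbrev polarRectangle (R : ℝ) : Set (ℝ × ℝ) := Ioo 0 R ×ˢ Ioo 0 (2 * π)

variable {R : ℝ}

lemma volume_restrict_polarRectangle (R : ℝ) :
    (volume : Measure (ℝ × ℝ)).restrict (polarRectangle R) =
      (volume.restrict (Ioo 0 R)).prod (volume.restrict (Ioo 0 (2 * π))) :=
  (Measure.prod_restrict _ _).symm

lemma measurableSet_polarRectangle (R : ℝ) : MeasurableSet (polarRectangle R) :=
  measurableSet_Ioo.prod measurableSet_Ioo

lemma polarRectangle_subset (R : ℝ) : polarRectangle R ⊆ Ioo 0 R ×ˢ univ :=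
  prod_mono_right (subset_univ _)

lemma isOpen_Ioo_prod_univ (R : ℝ) : IsOpen (Ioo 0 R ×ˢ (univ : Set ℝ)) :=
  isOpen_Ioo.prod isOpen_univ

lemma aestronglyMeasurable_polarRectangle {f : ℝ × ℝ → ℝ}
    (hf : ContinuousOn f (Ioo 0 R ×ˢ univ)) :
    AEStronglyMeasurable f (volume.restrict (polarRectangle R)) :=
  (hf.mono (polarRectangle_subset R)).aestronglyMeasurable (measurableSet_polarRectangle R)

lemma sin_fst_ne_zero (hR : R ≤ π) {p : ℝ × ℝ} (hp : p ∈ Ioo 0 R ×ˢ (univ : Set ℝ)) :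
    sin p.1 ≠ 0 :=
  (sin_pos_of_pos_of_lt_pi hp.1.1 (hp.1.2.trans_le hR)).ne'

end PolarRectangle

section LowerBound

/-- The density of the magnetic energy in the angular direction. -/
noncomputable def angularDensity (ν : ℝ) (u : ℝ → ℝ → ℂ) (p : ℝ × ℝ) : ℝ :=
  ‖deriv (fun t => u p.1 t) p.2 - Complex.I * (ν : ℂ) * u p.1 p.2‖ ^ 2 / sin p.1

variable {R ν : ℝ} {u : ℝ → ℝ → ℂ}

lemma magEnergyIntegrand_eq_add (ν : ℝ) (u : ℝ → ℝ → ℂ) (p : ℝ × ℝ) :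
    magEnergyIntegrand ν u p =
      kineticDensity (fun r => u r p.2) p.1 + angularDensity ν u p := by
  rcases eq_or_ne (sin p.1) 0 with hs | hs
  · simp [magEnergyIntegrand, kineticDensity, angularDensity, hs]
  · simp only [magEnergyIntegrand, kineticDensity, angularDensity]
    field_simp

namespace MagAdmissible

lemma contDiffOn_one (hu : MagAdmissible R ν u) :
    ContDiffOn ℝ 1 (Function.uncurry u) (Ioo 0 R ×ˢ (univ : Set ℝ)) :=
  hu.1.of_le (by simp)

lemma continuousOn_uncurry (hu : MagAdmissible R ν u) :
    ContinuousOn (fun p : ℝ × ℝ => u p.1 p.2) (Ioo 0 R ×ˢ univ) :=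
  hu.1.continuousOn

lemma differentiableAt_radial (hu : MagAdmissible R ν u) {r : ℝ} (hr : r ∈ Ioo 0 R) (θ : ℝ) :
    DifferentiableAt ℝ (fun s => u s θ) r :=
  (hasDerivAt_fst_of_contDiffOn_uncurry (p := (r, θ)) (isOpen_Ioo_prod_univ R) hu.contDiffOn_one
    ⟨hr, mem_univ θ⟩).differentiableAt

lemma differentiable_angular (hu : MagAdmissible R ν u) {r : ℝ} (hr : r ∈ Ioo 0 R) :
    Differentiable ℝ (u r) := fun θ =>
  (hasDerivAt_snd_of_contDiffOn_uncurry (p := (r, θ)) (isOpen_Ioo_prod_univ R) hu.contDiffOn_one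
    ⟨hr, mem_univ θ⟩).differentiableAt

lemma continuous_deriv_angular (hu : MagAdmissible R ν u) {r : ℝ} (hr : r ∈ Ioo 0 R) :
    Continuous (deriv (u r)) :=
  (continuousOn_deriv_snd_of_contDiffOn_uncurry (isOpen_Ioo_prod_univ R)
    hu.contDiffOn_one).comp_continuous (f := fun t : ℝ => ((r, t) : ℝ × ℝ)) (by fun_prop)
    fun t => ⟨hr, mem_univ t⟩

lemma continuousOn_mass (hu : MagAdmissible R ν u) :
    ContinuousOn (fun p : ℝ × ℝ => massDensity (fun r => u r p.2) p.1) (Ioo 0 R ×ˢ univ) :=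
  (hu.continuousOn_uncurry.norm.pow 2).mul (by fun_prop)

lemma continuousOn_kinetic (hu : MagAdmissible R ν u) :
    ContinuousOn (fun p : ℝ × ℝ => kineticDensity (fun r => u r p.2) p.1) (Ioo 0 R ×ˢ univ) :=
  ((continuousOn_deriv_fst_of_contDiffOn_uncurry (isOpen_Ioo_prod_univ R)
    hu.contDiffOn_one).norm.pow 2).mul (by fun_prop)

lemma continuousOn_centrifugal (hR : R ≤ π) (hu : MagAdmissible R ν u) :
    ContinuousOn (fun p : ℝ × ℝ => centrifugalDensity (fun r => u r p.2) p.1) (Ioo 0 R ×ˢ univ) :=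
  (hu.continuousOn_uncurry.norm.pow 2).div (by fun_prop) fun _ => sin_fst_ne_zero hR

lemma integrableOn_kinetic_and_angular (hR : R ≤ π) (hu : MagAdmissible R ν u) :
    IntegrableOn (fun p => kineticDensity (fun r => u r p.2) p.1) (polarRectangle R) ∧
      IntegrableOn (angularDensity ν u) (polarRectangle R) := by
  have hsum : IntegrableOn ((fun p => kineticDensity (fun r => u r p.2) p.1) + angularDensity ν u)
      (polarRectangle R) :=
    hu.2.2.2.1.congr_fun (fun p _ => magEnergyIntegrand_eq_add ν u p)
      (measurableSet_polarRectangle R)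
  refine (integrable_add_iff_of_nonneg
    (aestronglyMeasurable_polarRectangle hu.continuousOn_kinetic) ?_ ?_).1 hsum
  all_goals
    filter_upwards [ae_restrict_mem (measurableSet_polarRectangle R)] with p hp
    have hs := sin_pos_of_pos_of_lt_pi hp.1.1 (hp.1.2.trans_le hR)
    simp only [kineticDensity, angularDensity, Pi.zero_apply]
    positivity

lemma integral_energy_eq (hR : R ≤ π) (hu : MagAdmissible R ν u) :
    ∫ p in polarRectangle R, magEnergyIntegrand ν u p =
      (∫ p in polarRectangle R, kineticDensity (fun r => u r p.2) p.1) +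
        ∫ p in polarRectangle R, angularDensity ν u p := by
  simp only [magEnergyIntegrand_eq_add]
  obtain ⟨hkin, hang⟩ := hu.integrableOn_kinetic_and_angular hR
  exact integral_add hkin hang

lemma integral_slice_centrifugal_le (hν : |ν| ≤ 1 / 2) (hR : R ≤ π) (hu : MagAdmissible R ν u)
    {r : ℝ} (hr : r ∈ Ioo 0 R) :
    ∫ θ in Ioo 0 (2 * π), ν ^ 2 * centrifugalDensity (fun s => u s θ) r ≤
      ∫ θ in Ioo 0 (2 * π), angularDensity ν u (r, θ) := by
  have hs := sin_pos_of_pos_of_lt_pi hr.1 (hr.2.trans_le hR)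
  have hcircle := magnetic_wirtinger_circle hν
    (fun θ => (hu.differentiable_angular hr θ).hasDerivAt) (hu.continuous_deriv_angular hr)
    (by simpa using hu.2.1 r 0)
  simp only [centrifugalDensity, angularDensity, integral_const_mul, integral_div]
  rw [← mul_div_assoc]
  gcongr

lemma integrableOn_sq_mul_centrifugal (hν : |ν| ≤ 1 / 2) (hR : R ≤ π) (hu : MagAdmissible R ν u) :
    IntegrableOn (fun p => ν ^ 2 * centrifugalDensity (fun r => u r p.2) p.1)
      (polarRectangle R) := by
  have hmeas := (aestronglyMeasurable_polarRectangle (hu.continuousOn_centrifugal hR)).const_mul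
    (ν ^ 2)
  have hang := (hu.integrableOn_kinetic_and_angular hR).2
  rw [IntegrableOn, volume_restrict_polarRectangle] at *
  refine integrable_prod_of_integral_slice_le hmeas ?_ ?_ hang ?_
  all_goals filter_upwards [ae_restrict_mem measurableSet_Ioo] with r hr
  · intro θ
    have hs := sin_pos_of_pos_of_lt_pi hr.1 (hr.2.trans_le hR)
    unfold centrifugalDensity
    positivity
  · have hcont := (hu.differentiable_angular hr).continuous
    have hslice : Continuous fun θ => ν ^ 2 * centrifugalDensity (fun s => u s θ) r := by
      unfold centrifugalDensity
      fun_prop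
    exact hslice.integrableOn_Icc.mono_set Ioo_subset_Icc_self
  · exact hu.integral_slice_centrifugal_le hν hR hr

lemma integral_sq_mul_centrifugal_le (hν : |ν| ≤ 1 / 2) (hR : R ≤ π) (hu : MagAdmissible R ν u) :
    ∫ p in polarRectangle R, ν ^ 2 * centrifugalDensity (fun r => u r p.2) p.1 ≤
      ∫ p in polarRectangle R, angularDensity ν u p := by
  have hcent := hu.integrableOn_sq_mul_centrifugal hν hR
  have hang := (hu.integrableOn_kinetic_and_angular hR).2
  rw [IntegrableOn, volume_restrict_polarRectangle] at hcent hang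
  rw [volume_restrict_polarRectangle]
  refine integral_prod_mono_of_integral_slice_le hcent hang ?_
  filter_upwards [ae_restrict_mem measurableSet_Ioo] with r hr
  exact hu.integral_slice_centrifugal_le hν hR hr

lemma exists_mem_polarRectangle_ne_zero (hu : MagAdmissible R ν u) :
    ∃ p ∈ polarRectangle R, u p.1 p.2 ≠ 0 := by
  have hnz := hu.2.2.1
  push Not at hnz
  obtain ⟨r, hr, θ, hθ⟩ := hnz
  have hper : Function.Periodic (u r) (2 * π) := hu.2.1 r
  obtain ⟨θ₀, hθ₀, heq⟩ := hper.exists_mem_Ico₀ two_pi_pos θ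
  rw [heq] at hθ
  have hne : ∀ᶠ t in 𝓝[>] θ₀, u r t ≠ 0 :=
    ((hu.differentiable_angular hr).continuous.continuousAt.eventually_ne hθ).filter_mono
      nhdsWithin_le_nhds
  obtain ⟨t, hut, ht⟩ := (hne.and (Ioo_mem_nhdsGT hθ₀.2)).exists
  exact ⟨(r, t), ⟨hr, hθ₀.1.trans_lt ht.1, ht.2⟩, hut⟩

lemma integral_mass_pos (hR : R ≤ π) (hu : MagAdmissible R ν u) :
    0 < ∫ p in polarRectangle R, massDensity (fun r => u r p.2) p.1 := by
  set N : ℝ × ℝ → ℝ := fun p => massDensity (fun r => u r p.2) p.1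
  have hsin : ∀ p ∈ polarRectangle R, 0 < sin p.1 := fun p hp =>
    sin_pos_of_pos_of_lt_pi hp.1.1 (hp.1.2.trans_le hR)
  have hnonneg : ∀ p ∈ polarRectangle R, 0 ≤ N p := fun p hp =>
    mul_nonneg (sq_nonneg _) (hsin p hp).le
  rw [setIntegral_pos_iff_support_of_nonneg_ae
    ((ae_restrict_mem (measurableSet_polarRectangle R)).mono hnonneg) hu.2.2.2.2, inter_comm]
  have hopen : IsOpen (polarRectangle R ∩ N ⁻¹' {0}ᶜ) :=
    (hu.continuousOn_mass.mono (polarRectangle_subset R)).isOpen_inter_preimage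
      (isOpen_Ioo.prod isOpen_Ioo) isOpen_compl_singleton
  obtain ⟨p, hp, hup⟩ := hu.exists_mem_polarRectangle_ne_zero
  exact hopen.measure_pos _
    ⟨p, hp, mul_ne_zero (pow_ne_zero 2 (norm_ne_zero_iff.2 hup)) (hsin p hp).ne'⟩

end MagAdmissible

namespace DirAdmissible

lemma continuousOn_radial (hu : DirAdmissible R ν u) (θ : ℝ) :
    ContinuousOn (fun r => u r θ) (Ioc 0 R) := by
  obtain ⟨hmag, ε, hε, hvan⟩ := hu
  intro r hr
  rcases hr.2.lt_or_eq with hrR | rfl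
  · exact (hmag.differentiableAt_radial ⟨hr.1, hrR⟩ θ).continuousAt.continuousWithinAt
  · have hzero : (fun s => u s θ) =ᶠ[𝓝 r] fun _ => 0 := by
      filter_upwards [Ioi_mem_nhds (sub_lt_self r hε)] with s hs using hvan s hs θ
    exact (continuousAt_const.congr hzero.symm).continuousWithinAt

lemma ae_radialFormDomain (hν : |ν| ≤ 1 / 2) (hν0 : ν ≠ 0) (hR : R ≤ π)
    (hu : DirAdmissible R ν u) :
    ∀ᵐ θ ∂volume.restrict (Ioo 0 (2 * π)), RadialFormDomain R fun r => u r θ := by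
  have hmass : IntegrableOn (fun p : ℝ × ℝ => massDensity (fun r => u r p.2) p.1)
    (polarRectangle R) := hu.1.2.2.2.2
  have hkin := (hu.1.integrableOn_kinetic_and_angular hR).1
  have hcent := hu.1.integrableOn_sq_mul_centrifugal hν hR
  rw [IntegrableOn, volume_restrict_polarRectangle] at hmass hkin hcent
  filter_upwards [hmass.prod_left_ae, hkin.prod_left_ae, hcent.prod_left_ae] with θ hm hk hc
  exact
    { continuousOn := hu.continuousOn_radial θ
      differentiableAt := fun r hr => hu.1.differentiableAt_radial hr θ
      eq_zero := by
        obtain ⟨-, ε, hε, hvan⟩ := hu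
        exact hvan R (sub_lt_self R hε) θ
      integrableOn_mass := hm
      integrableOn_centrifugal :=
        (integrable_const_mul_iff (pow_ne_zero 2 hν0).isUnit _).1 hc
      integrableOn_kinetic := hk }

lemma mul_integral_mass_le (hν : |ν| ≤ 1 / 2) (hν0 : ν ≠ 0) (hR : R ∈ Ioo 0 π)
    (hu : DirAdmissible R ν u) :
    ν * (ν + 1) * ∫ p in polarRectangle R, massDensity (fun r => u r p.2) p.1 ≤
      (∫ p in polarRectangle R, kineticDensity (fun r => u r p.2) p.1) +
        ∫ p in polarRectangle R, ν ^ 2 * centrifugalDensity (fun r => u r p.2) p.1 := by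
  have hmass : IntegrableOn (fun p : ℝ × ℝ => massDensity (fun r => u r p.2) p.1)
    (polarRectangle R) := hu.1.2.2.2.2
  have hkin := (hu.1.integrableOn_kinetic_and_angular hR.2.le).1
  have hcent := hu.1.integrableOn_sq_mul_centrifugal hν hR.2.le
  rw [IntegrableOn, volume_restrict_polarRectangle] at hmass hkin hcent
  rw [volume_restrict_polarRectangle, integral_prod_symm _ hmass, integral_prod_symm _ hkin,
    integral_prod_symm _ hcent, ← integral_const_mul,
    ← integral_add hkin.integral_prod_right hcent.integral_prod_right]
  refine integral_mono_ae (hmass.integral_prod_right.const_mul _)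
    (hkin.integral_prod_right.add hcent.integral_prod_right) ?_
  filter_upwards [hu.ae_radialFormDomain hν hν0 hR.2.le] with θ hθ
  simpa only [integral_const_mul] using hθ.mul_integral_mass_le ν hR

theorem le_magQuot (hν : |ν| ≤ 1 / 2) (hν0 : ν ≠ 0) (hR : R ∈ Ioo 0 π)
    (hu : DirAdmissible R ν u) : ν * (ν + 1) ≤ magQuot R ν u := by
  refine (le_div_iff₀ (hu.1.integral_mass_pos hR.2.le)).2 ?_
  rw [hu.1.integral_energy_eq hR.2.le]
  exact (hu.mul_integral_mass_le hν hν0 hR).trans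
    (add_le_add_right (hu.1.integral_sq_mul_centrifugal_le hν hR.2.le) _)

end DirAdmissible

end LowerBound

section RadialFunctions

variable {R ν : ℝ} {w : ℝ → ℂ}

lemma magEnergyIntegrand_radial (ν : ℝ) (w : ℝ → ℂ) (p : ℝ × ℝ) :
    magEnergyIntegrand ν (fun r _ => w r) p =
      kineticDensity w p.1 + ν ^ 2 * centrifugalDensity w p.1 := by
  simp only [magEnergyIntegrand_eq_add, angularDensity, centrifugalDensity, deriv_const, zero_sub,
    norm_neg, norm_mul, Complex.norm_I, one_mul, Complex.norm_real, mul_pow, norm_eq_abs, sq_abs,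
    mul_div_assoc]

lemma integrableOn_polarRectangle_comp_fst {f : ℝ → ℝ} (hf : IntegrableOn f (Ioo 0 R)) :
    IntegrableOn (fun p => f p.1) (polarRectangle R) := by
  rw [IntegrableOn, volume_restrict_polarRectangle]
  exact Integrable.comp_fst hf _

lemma integral_polarRectangle_comp_fst (R : ℝ) (f : ℝ → ℝ) :
    ∫ p in polarRectangle R, f p.1 = 2 * π * ∫ r in Ioo 0 R, f r := by
  rw [volume_restrict_polarRectangle, integral_fun_fst, measureReal_restrict_apply_univ,
    volume_real_Ioo_of_le two_pi_pos.le, sub_zero, smul_eq_mul]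

namespace RadialFormDomain

lemma integrableOn_energy (hw : RadialFormDomain R w) (ν : ℝ) :
    IntegrableOn (fun r => kineticDensity w r + ν ^ 2 * centrifugalDensity w r) (Ioo 0 R) :=
  hw.integrableOn_kinetic.add (hw.integrableOn_centrifugal.const_mul (ν ^ 2))

lemma dirAdmissible (hw : RadialFormDomain R w) (hsmooth : ContDiffOn ℝ (⊤ : ℕ∞) w (Ioo 0 R))
    (hvan : ∃ ε > 0, ∀ r, R - ε < r → w r = 0) (hne : ∃ r ∈ Ioo 0 R, w r ≠ 0) :
    DirAdmissible R ν fun r _ => w r := by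
  obtain ⟨ε, hε, hvan⟩ := hvan
  obtain ⟨r, hr, hwr⟩ := hne
  refine ⟨⟨hsmooth.comp contDiff_fst.contDiffOn fun p hp => hp.1, fun _ _ => rfl,
    fun hzero => hwr (hzero r hr 0), ?_, ?_⟩, ε, hε, fun r hr _ => hvan r hr⟩
  · simp only [funext (magEnergyIntegrand_radial ν w)]
    exact integrableOn_polarRectangle_comp_fst (hw.integrableOn_energy ν)
  · exact integrableOn_polarRectangle_comp_fst hw.integrableOn_mass

lemma magQuot_radial (hR : R ∈ Ioo 0 π) (hw : RadialFormDomain R w)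
    (hmass : ∫ r in Ioo 0 R, massDensity w r ≠ 0) :
    magQuot R ν (fun r _ => w r) = ν * (ν + 1) +
      (∫ r in Ioo 0 R, excessDensity ν w r) / ∫ r in Ioo 0 R, massDensity w r := by
  have henergy : ∫ p in polarRectangle R, magEnergyIntegrand ν (fun r _ => w r) p = 2 * π *
      (ν * (ν + 1) * (∫ r in Ioo 0 R, massDensity w r) + ∫ r in Ioo 0 R, excessDensity ν w r) := by
    simp only [magEnergyIntegrand_radial]
    rw [integral_polarRectangle_comp_fst R
        fun r => kineticDensity w r + ν ^ 2 * centrifugalDensity w r,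
      integral_add hw.integrableOn_kinetic (hw.integrableOn_centrifugal.const_mul (ν ^ 2)),
      integral_const_mul, hw.groundState_representation ν hR]
  calc magQuot R ν (fun r _ => w r)
      = (2 * π * (ν * (ν + 1) * (∫ r in Ioo 0 R, massDensity w r) +
          ∫ r in Ioo 0 R, excessDensity ν w r)) / (2 * π * ∫ r in Ioo 0 R, massDensity w r) :=
        congrArg₂ _ henergy (integral_polarRectangle_comp_fst R (massDensity w))
    _ = _ := by
        rw [mul_div_mul_left _ _ two_pi_pos.ne', add_div, mul_div_cancel_right₀ _ hmass]

end RadialFormDomain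

end RadialFunctions

section Cutoff

variable {a b r : ℝ}

/-- A smooth function that is `1` on `(-∞, a]` and `0` on `[b, ∞)`, for `a < b`. -/
noncomputable def cutoff (a b r : ℝ) : ℝ := smoothTransition ((b - r) / (b - a))

lemma contDiff_cutoff (a b : ℝ) {n : ℕ∞} : ContDiff ℝ n (cutoff a b) :=
  smoothTransition.contDiff.comp (by fun_prop)

lemma cutoff_of_le (hab : a < b) (hr : r ≤ a) : cutoff a b r = 1 :=
  smoothTransition.one_of_one_le ((one_le_div (sub_pos.2 hab)).2 (by gcongr))

lemma cutoff_of_ge (hab : a < b) (hr : b ≤ r) : cutoff a b r = 0 :=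
  smoothTransition.zero_of_nonpos
    (div_nonpos_of_nonpos_of_nonneg (sub_nonpos.2 hr) (sub_pos.2 hab).le)

lemma deriv_smoothTransition_of_notMem {x : ℝ} (hx : x ∉ Icc 0 1) :
    deriv smoothTransition x = 0 := by
  rw [mem_Icc, not_and_or, not_le, not_le] at hx
  rcases hx with hx | hx
  · have hzero : smoothTransition =ᶠ[𝓝 x] fun _ => 0 := by
      filter_upwards [Iio_mem_nhds hx] with y hy using smoothTransition.zero_of_nonpos hy.le
    rw [hzero.deriv_eq, deriv_const]
  · have hone : smoothTransition =ᶠ[𝓝 x] fun _ => 1 := by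
      filter_upwards [Ioi_mem_nhds hx] with y hy using smoothTransition.one_of_one_le hy.le
    rw [hone.deriv_eq, deriv_const]

lemma exists_abs_deriv_smoothTransition_le : ∃ C, ∀ x, |deriv smoothTransition x| ≤ C :=
  (HasCompactSupport.intro isCompact_Icc fun _ =>
    deriv_smoothTransition_of_notMem).exists_bound_of_continuous
    ((smoothTransition.contDiff (n := 1)).continuous_deriv le_rfl)

lemma deriv_cutoff (a b r : ℝ) :
    deriv (cutoff a b) r = -deriv smoothTransition ((b - r) / (b - a)) / (b - a) := by
  have houter : HasDerivAt smoothTransition (deriv smoothTransition ((b - r) / (b - a)))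
      ((b - r) / (b - a)) :=
    ((smoothTransition.contDiff (n := 1)).differentiable one_ne_zero _).hasDerivAt
  have hinner : HasDerivAt (fun r => (b - r) / (b - a)) (-1 / (b - a)) r :=
    ((hasDerivAt_id r).const_sub b).div_const _
  exact (houter.comp r hinner).deriv.trans (by ring)

lemma deriv_cutoff_of_notMem (hab : a < b) (hr : r ∉ Icc a b) : deriv (cutoff a b) r = 0 := by
  have hd : 0 < b - a := sub_pos.2 hab
  rw [deriv_cutoff, deriv_smoothTransition_of_notMem, neg_zero, zero_div]
  refine fun hmem => hr ⟨?_, ?_⟩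
  · linarith [(div_le_one hd).1 hmem.2]
  · linarith [div_mul_cancel₀ (b - r) hd.ne', mul_nonneg hmem.1 hd.le]

lemma exists_abs_deriv_cutoff_le :
    ∃ C, ∀ a b r : ℝ, a < b → |deriv (cutoff a b) r| ≤ C / (b - a) := by
  obtain ⟨C, hC⟩ := exists_abs_deriv_smoothTransition_le
  refine ⟨C, fun a b r hab => ?_⟩
  have hd : 0 < b - a := sub_pos.2 hab
  rw [deriv_cutoff, abs_div, abs_neg, abs_of_pos hd]
  gcongr
  exact hC _

end Cutoff

section TrialFunction

variable {ν R r : ℝ} {χ : ℝ → ℝ}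

lemma intervalIntegrable_sin_rpow {p : ℝ} (hp : -1 < p) (hR : R ∈ Ico 0 π) :
    IntervalIntegrable (fun r => sin r ^ p) volume 0 R := by
  have hsinc : ∀ r ∈ uIcc 0 R, 0 < sinc r := by
    intro r hr
    rw [uIcc_of_le hR.1] at hr
    rcases hr.1.eq_or_lt with rfl | hr0
    · simp
    · rw [sinc_of_ne_zero hr0.ne']
      exact div_pos (sin_pos_of_pos_of_lt_pi hr0 (hr.2.trans_lt hR.2)) hr0
  have hcont : ContinuousOn (fun r => sinc r ^ p) (uIcc 0 R) :=
    continuous_sinc.continuousOn.rpow_const fun r hr => Or.inl (hsinc r hr).ne'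
  refine ((intervalIntegral.intervalIntegrable_rpow' hp).mul_continuousOn hcont).congr
    fun r hr => ?_
  have hr0 : 0 < r := by
    rw [uIoc_of_le hR.1] at hr
    exact hr.1
  calc r ^ p * sinc r ^ p = (r * sinc r) ^ p :=
        (mul_rpow hr0.le (hsinc r (uIoc_subset_uIcc hr)).le).symm
    _ = sin r ^ p := by rw [sinc_of_ne_zero hr0.ne', mul_div_cancel₀ _ hr0.ne']

lemma integrableOn_sin_rpow_mul {p : ℝ} (hp : -1 < p) (hR : R ∈ Ico 0 π) {g : ℝ → ℝ}
    (hg : Continuous g) : IntegrableOn (fun r => sin r ^ p * g r) (Ioo 0 R) :=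
  (intervalIntegrable_iff_integrableOn_Ioo_of_le hR.1).1
    ((intervalIntegrable_sin_rpow hp hR).mul_continuousOn hg.continuousOn)

lemma integral_sin_rpow_pos {p : ℝ} (hp : -1 < p) (hR : R ∈ Ioo 0 π) :
    0 < ∫ r in Ioo 0 R, sin r ^ p := by
  rw [← integral_Ioc_eq_integral_Ioo, ← intervalIntegral.integral_of_le hR.1.le]
  exact intervalIntegral.intervalIntegral_pos_of_pos_on
    (intervalIntegrable_sin_rpow hp ⟨hR.1.le, hR.2⟩)
    (fun r hr => rpow_pos_of_pos (sin_pos_of_pos_of_lt_pi hr.1 (hr.2.trans hR.2)) p) hR.1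

lemma rpow_two_mul_sub_one {x : ℝ} (hx : 0 < x) (ν : ℝ) : x ^ (2 * ν - 1) = (x ^ ν) ^ 2 / x := by
  rw [rpow_sub_one hx.ne', mul_comm, rpow_mul hx.le, rpow_two]

lemma rpow_two_mul_add_one {x : ℝ} (hx : 0 < x) (ν : ℝ) : x ^ (2 * ν + 1) = (x ^ ν) ^ 2 * x := by
  rw [rpow_add_one hx.ne', mul_comm 2, rpow_mul hx.le, rpow_two]

/-- The ground state `sin r ^ ν` of the whole sphere, multiplied by a radial cutoff `χ`. -/
noncomputable def trialFunction (ν : ℝ) (χ : ℝ → ℝ) (r : ℝ) : ℂ := (sin r ^ ν * χ r : ℝ)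

lemma norm_trialFunction_sq (ν : ℝ) (χ : ℝ → ℝ) (r : ℝ) :
    ‖trialFunction ν χ r‖ ^ 2 = (sin r ^ ν) ^ 2 * χ r ^ 2 := by
  rw [trialFunction, Complex.norm_real, norm_eq_abs, sq_abs, mul_pow]

lemma hasDerivAt_trialFunction (hs : sin r ≠ 0) (hχ : DifferentiableAt ℝ χ r) :
    HasDerivAt (trialFunction ν χ)
      ((sin r ^ ν * (ν * cos r * χ r + sin r * deriv χ r) / sin r : ℝ) : ℂ) r := by
  have hreal := (((hasDerivAt_sin r).rpow_const (p := ν) (Or.inl hs)).mul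
    hχ.hasDerivAt).ofReal_comp
  refine hreal.congr_deriv (congrArg _ ?_)
  rw [rpow_sub_one hs]
  field_simp

lemma massDensity_trialFunction (hs : 0 < sin r) :
    massDensity (trialFunction ν χ) r = sin r ^ (2 * ν + 1) * χ r ^ 2 := by
  rw [massDensity, norm_trialFunction_sq, rpow_two_mul_add_one hs]
  ring

lemma centrifugalDensity_trialFunction (hs : 0 < sin r) :
    centrifugalDensity (trialFunction ν χ) r = sin r ^ (2 * ν - 1) * χ r ^ 2 := by
  rw [centrifugalDensity, norm_trialFunction_sq, rpow_two_mul_sub_one hs]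
  ring

lemma kineticDensity_trialFunction (hs : 0 < sin r) (hχ : DifferentiableAt ℝ χ r) :
    kineticDensity (trialFunction ν χ) r =
      sin r ^ (2 * ν - 1) * (ν * cos r * χ r + sin r * deriv χ r) ^ 2 := by
  rw [kineticDensity, (hasDerivAt_trialFunction hs.ne' hχ).deriv, Complex.norm_real, norm_eq_abs,
    sq_abs, rpow_two_mul_sub_one hs]
  field_simp

lemma excessDensity_trialFunction (hs : 0 < sin r) (hχ : DifferentiableAt ℝ χ r) :
    excessDensity ν (trialFunction ν χ) r = sin r ^ (2 * ν + 1) * deriv χ r ^ 2 := by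
  have hreal : sin r • deriv (trialFunction ν χ) r - (ν * cos r) • trialFunction ν χ r =
      ((sin r ^ ν * (sin r * deriv χ r) : ℝ) : ℂ) := by
    rw [(hasDerivAt_trialFunction hs.ne' hχ).deriv, trialFunction, Complex.real_smul,
      Complex.real_smul, ← Complex.ofReal_mul, ← Complex.ofReal_mul, ← Complex.ofReal_sub]
    congr 1
    field_simp
    ring
  rw [excessDensity, hreal, Complex.norm_real, norm_eq_abs, sq_abs, rpow_two_mul_add_one hs]
  field_simp

lemma continuous_trialFunction (hν : 0 ≤ ν) (hχ : Continuous χ) :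
    Continuous (trialFunction ν χ) :=
  Complex.continuous_ofReal.comp ((continuous_sin.rpow_const fun _ => Or.inr hν).mul hχ)

lemma contDiffOn_trialFunction {n : ℕ∞} (hR : R ≤ π) (hχ : ContDiff ℝ n χ) :
    ContDiffOn ℝ n (trialFunction ν χ) (Ioo 0 R) := by
  refine Complex.ofRealCLM.contDiff.comp_contDiffOn (ContDiffOn.mul (fun r hr => ?_)
    hχ.contDiffOn)
  exact (contDiff_sin.contDiffAt.rpow_const_of_ne
    (sin_pos_of_pos_of_lt_pi hr.1 (hr.2.trans_le hR)).ne').contDiffWithinAt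

lemma radialFormDomain_trialFunction (hν : 0 < ν) (hR : R ∈ Ioo 0 π) (hχ : ContDiff ℝ 1 χ)
    (hχR : χ R = 0) : RadialFormDomain R (trialFunction ν χ) := by
  have hsin : ∀ r ∈ Ioo 0 R, 0 < sin r := fun r hr =>
    sin_pos_of_pos_of_lt_pi hr.1 (hr.2.trans hR.2)
  have hcont := hχ.continuous
  have hcont' := hχ.continuous_deriv le_rfl
  have hdiff := hχ.differentiable one_ne_zero
  have hR' : R ∈ Ico 0 π := ⟨hR.1.le, hR.2⟩
  exact
    { continuousOn := (continuous_trialFunction hν.le hcont).continuousOn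
      differentiableAt := fun r hr =>
        (hasDerivAt_trialFunction (hsin r hr).ne' (hdiff r)).differentiableAt
      eq_zero := by simp [trialFunction, hχR]
      integrableOn_mass :=
        (integrableOn_sin_rpow_mul (by linarith) hR' (hcont.pow 2)).congr_fun
          (fun r hr => (massDensity_trialFunction (hsin r hr)).symm) measurableSet_Ioo
      integrableOn_centrifugal :=
        (integrableOn_sin_rpow_mul (by linarith) hR' (hcont.pow 2)).congr_fun
          (fun r hr => (centrifugalDensity_trialFunction (hsin r hr)).symm) measurableSet_Ioo
      integrableOn_kinetic :=
        (integrableOn_sin_rpow_mul (by linarith) hR'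
          ((((continuous_const.mul continuous_cos).mul hcont).add
            (continuous_sin.mul hcont')).pow 2)).congr_fun
          (fun r hr => (kineticDensity_trialFunction (hsin r hr) (hdiff r)).symm)
          measurableSet_Ioo }

variable {a b : ℝ}

lemma dirAdmissible_trialFunction (hν : 0 < ν) (ha : 0 < a) (hab : a < b) (hbR : b < R)
    (hR : R < π) : DirAdmissible R ν fun r _ => trialFunction ν (cutoff a b) r := by
  have haR : a ∈ Ioo 0 R := ⟨ha, hab.trans hbR⟩
  refine (radialFormDomain_trialFunction hν ⟨ha.trans haR.2, hR⟩ (contDiff_cutoff a b)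
    (cutoff_of_ge hab hbR.le)).dirAdmissible (contDiffOn_trialFunction hR.le (contDiff_cutoff a b))
    ⟨R - b, sub_pos.2 hbR, fun r hr => ?_⟩ ⟨a, haR, ?_⟩
  · rw [sub_sub_cancel] at hr
    simp [trialFunction, cutoff_of_ge hab hr.le]
  · have hs := sin_pos_of_pos_of_lt_pi ha (haR.2.trans hR)
    rw [trialFunction, cutoff_of_le hab le_rfl, mul_one, Complex.ofReal_ne_zero]
    positivity

lemma integral_sin_rpow_le_integral_mass_trialFunction {c : ℝ} (hν : 0 < ν) (hc : 0 < c)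
    (hca : c ≤ a) (hab : a < b) (hbR : b < R) (hR : R < π) :
    ∫ r in Ioo 0 c, sin r ^ (2 * ν + 1) ≤
      ∫ r in Ioo 0 R, massDensity (trialFunction ν (cutoff a b)) r := by
  have hcR : c < R := hca.trans_lt (hab.trans hbR)
  have hsin : ∀ r ∈ Ioo 0 R, 0 < sin r := fun r hr =>
    sin_pos_of_pos_of_lt_pi hr.1 (hr.2.trans hR)
  calc ∫ r in Ioo 0 c, sin r ^ (2 * ν + 1)
      = ∫ r in Ioo 0 c, massDensity (trialFunction ν (cutoff a b)) r := by
        refine setIntegral_congr_fun measurableSet_Ioo fun r hr => ?_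
        simp only [massDensity_trialFunction (hsin r ⟨hr.1, hr.2.trans hcR⟩),
          cutoff_of_le hab (hr.2.le.trans hca), one_pow, mul_one]
    _ ≤ _ := by
        refine setIntegral_mono_set (radialFormDomain_trialFunction hν ⟨hc.trans hcR, hR⟩
          (contDiff_cutoff a b) (cutoff_of_ge hab hbR.le)).integrableOn_mass ?_
          (Ioo_subset_Ioo_right hcR.le).eventuallyLE
        filter_upwards [ae_restrict_mem measurableSet_Ioo] with r hr
        exact mul_nonneg (sq_nonneg _) (hsin r hr).le

lemma excessDensity_trialFunction_le {C : ℝ} (hν : 0 ≤ ν)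
    (hC : |deriv (cutoff a b) r| ≤ C / (b - a)) (hr : r ∈ Ioo 0 π) (har : a ≤ r) :
    excessDensity ν (trialFunction ν (cutoff a b)) r ≤
      (π - a) ^ (2 * ν + 1) * (C / (b - a)) ^ 2 := by
  have hs : 0 < sin r := sin_pos_of_mem_Ioo hr
  have hsa : sin r ≤ π - a := by
    rw [← sin_pi_sub]
    exact (sin_le (sub_nonneg.2 hr.2.le)).trans (by gcongr)
  rw [excessDensity_trialFunction hs
    ((contDiff_cutoff a b (n := 1)).differentiable one_ne_zero r), ← sq_abs (deriv _ r)]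
  have hpow : 0 ≤ (π - a) ^ (2 * ν + 1) := rpow_nonneg (hs.le.trans hsa) _
  gcongr

lemma integral_excess_trialFunction_le {C : ℝ} (hν : 0 ≤ ν)
    (hC : ∀ r, |deriv (cutoff a b) r| ≤ C / (b - a)) (ha : 0 < a) (hab : a < b) (hbR : b < R)
    (hR : R < π) :
    ∫ r in Ioo 0 R, excessDensity ν (trialFunction ν (cutoff a b)) r ≤
      C ^ 2 * (π - a) ^ (2 * ν + 1) / (b - a) := by
  have hdiff := (contDiff_cutoff a b (n := 1)).differentiable one_ne_zero
  have hsub : Icc a b ⊆ Ioo 0 R := fun r hr => ⟨ha.trans_le hr.1, hr.2.trans_lt hbR⟩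
  have hsin : ∀ r ∈ Ioo 0 R, 0 < sin r := fun r hr =>
    sin_pos_of_pos_of_lt_pi hr.1 (hr.2.trans hR)
  have hvan : ∀ r ∈ Ioo 0 R \ Icc a b,
      excessDensity ν (trialFunction ν (cutoff a b)) r = 0 := fun r hr => by
    rw [excessDensity_trialFunction (hsin r hr.1) (hdiff r), deriv_cutoff_of_notMem hab hr.2,
      zero_pow two_ne_zero, mul_zero]
  have hbound : ∀ r ∈ Icc a b, ‖excessDensity ν (trialFunction ν (cutoff a b)) r‖ ≤
      (π - a) ^ (2 * ν + 1) * (C / (b - a)) ^ 2 := fun r hr => by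
    rw [norm_of_nonneg (excessDensity_nonneg (hsin r (hsub hr)).le)]
    exact excessDensity_trialFunction_le hν (hC r) ⟨(hsub hr).1, (hsub hr).2.trans hR⟩ hr.1
  rw [setIntegral_eq_of_subset_of_forall_sdiff_eq_zero measurableSet_Ioo hsub hvan]
  calc _ ≤ (π - a) ^ (2 * ν + 1) * (C / (b - a)) ^ 2 * volume.real (Icc a b) :=
        (le_norm_self _).trans (norm_setIntegral_le_of_norm_le_const measure_Icc_lt_top hbound)
    _ = _ := by
        have hd : b - a ≠ 0 := (sub_pos.2 hab).ne'
        rw [volume_real_Icc_of_le hab.le]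
        field_simp

lemma magQuot_trialFunction_le {C c : ℝ} (hν : 0 < ν)
    (hC : ∀ r, |deriv (cutoff a b) r| ≤ C / (b - a)) (hc : 0 < c) (hca : c ≤ a) (hab : a < b)
    (hbR : b < R) (hR : R < π) :
    magQuot R ν (fun r _ => trialFunction ν (cutoff a b) r) ≤ ν * (ν + 1) +
      C ^ 2 * (π - a) ^ (2 * ν + 1) / (b - a) / ∫ r in Ioo 0 c, sin r ^ (2 * ν + 1) := by
  have haR : a < R := hab.trans hbR
  have hR' : R ∈ Ioo 0 π := ⟨hc.trans_le (hca.trans haR.le), hR⟩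
  have hground := integral_sin_rpow_pos (p := 2 * ν + 1) (by linarith)
    ⟨hc, hca.trans_lt (haR.trans hR)⟩
  have hmass := integral_sin_rpow_le_integral_mass_trialFunction hν hc hca hab hbR hR
  have hexcess := integral_excess_trialFunction_le hν.le hC (hc.trans_le hca) hab hbR hR
  rw [(radialFormDomain_trialFunction hν hR' (contDiff_cutoff a b)
    (cutoff_of_ge hab hbR.le)).magQuot_radial hR' (hground.trans_le hmass).ne']
  have hpos : 0 ≤ C ^ 2 * (π - a) ^ (2 * ν + 1) / (b - a) :=
    div_nonneg (mul_nonneg (sq_nonneg C) (rpow_nonneg (by linarith) _)) (sub_pos.2 hab).le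
  gcongr

end TrialFunction

section Eigenvalue

variable {ν R : ℝ}

lemma mem_lowerBounds_magQuot (hν : |ν| ≤ 1 / 2) (hν0 : ν ≠ 0) (hR : R ∈ Ioo 0 π) :
    ν * (ν + 1) ∈ lowerBounds {q | ∃ u : ℝ → ℝ → ℂ, DirAdmissible R ν u ∧ q = magQuot R ν u} := by
  rintro q ⟨u, hu, rfl⟩
  exact hu.le_magQuot hν hν0 hR

theorem le_Lam (hν : ν ∈ Ioc 0 (1 / 2)) (hR : R ∈ Ioo 0 π) : ν * (ν + 1) ≤ Lam ν R := by
  have hR0 := hR.1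
  refine le_csInf ⟨_, _, dirAdmissible_trialFunction (a := R / 3) (b := R / 2) hν.1 (by linarith)
    (by linarith) (by linarith) hR.2, rfl⟩ ?_
  exact mem_lowerBounds_magQuot ((abs_of_pos hν.1).trans_le hν.2) hν.1.ne' hR

lemma Lam_le_magQuot (hν : |ν| ≤ 1 / 2) (hν0 : ν ≠ 0) (hR : R ∈ Ioo 0 π) {u : ℝ → ℝ → ℂ}
    (hu : DirAdmissible R ν u) : Lam ν R ≤ magQuot R ν u :=
  csInf_le ⟨_, mem_lowerBounds_magQuot hν hν0 hR⟩ ⟨u, hu, rfl⟩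

theorem exists_Lam_le (hν : ν ∈ Ioc 0 (1 / 2)) :
    ∃ K, ∀ R ∈ Ioo (5 * π / 6) π, Lam ν R ≤ ν * (ν + 1) + K * (π - R) ^ (2 * ν) := by
  obtain ⟨C, hC⟩ := exists_abs_deriv_cutoff_le
  refine ⟨C ^ 2 * 3 ^ (2 * ν + 1) / ∫ r in Ioo 0 (π / 2), sin r ^ (2 * ν + 1), fun R hR => ?_⟩
  obtain ⟨d, rfl⟩ : ∃ d, R = π - d := ⟨π - R, (sub_sub_cancel π R).symm⟩
  obtain ⟨hd0, hdπ⟩ : 0 < d ∧ d < π / 6 := ⟨by linarith [hR.2], by linarith [hR.1]⟩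
  have hπ := pi_pos
  have ha : 0 < π - 3 * d := by linarith
  have hca : π / 2 ≤ π - 3 * d := by linarith
  have hab : π - 3 * d < π - 2 * d := by linarith
  have hbR : π - 2 * d < π - d := by linarith
  have hadm := dirAdmissible_trialFunction hν.1 ha hab hbR hR.2
  have hquot := magQuot_trialFunction_le hν.1 (fun r => hC _ _ r hab) (half_pos hπ) hca hab hbR hR.2
  refine (Lam_le_magQuot ((abs_of_pos hν.1).trans_le hν.2) hν.1.ne' ⟨by linarith, hR.2⟩
    hadm).trans (hquot.trans_eq ?_)
  have hlen : π - 2 * d - (π - 3 * d) = d := by ring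
  rw [hlen, sub_sub_cancel, sub_sub_cancel, mul_rpow zero_le_three hd0.le,
    rpow_add_one hd0.ne']
  field_simp

lemma tendsto_add_mul_sub_rpow {p : ℝ} (hp : 0 < p) (b c K : ℝ) :
    Tendsto (fun x => c + K * (b - x) ^ p) (𝓝[<] b) (𝓝 c) := by
  have hpow : Continuous fun x : ℝ => (b - x) ^ p :=
    (continuous_const.sub continuous_id).rpow_const fun _ => Or.inr hp.le
  have hcont : Continuous fun x => c + K * (b - x) ^ p := by fun_prop
  simpa only [sub_self, zero_rpow hp.ne', mul_zero, add_zero] using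
    (hcont.tendsto b).mono_left nhdsWithin_le_nhds

end Eigenvalue

/-- The first magnetic Dirichlet eigenvalue `Λ(R) = λ₁(D_R, A^{(ν)}_{x₀})` of geodesic
disks satisfies `Λ(R) ≥ ν(ν+1)` for all `R ∈ (0, π)` and converges to
`μ₁(S², A^{(ν)}_{x₀}) = ν(ν+1)` as `R → π⁻`. -/
theorem dirichlet_disk_eigenvalue_limit (ν : ℝ) (hν : ν ∈ Ioc (0:ℝ) (1/2)) :
    (∀ R ∈ Ioo (0:ℝ) π, ν * (ν + 1) ≤ Lam ν R) ∧
    Tendsto (Lam ν) (nhdsWithin π (Iio π)) (nhds (ν * (ν + 1))) := by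
  refine ⟨fun R hR => le_Lam hν hR, ?_⟩
  obtain ⟨K, hK⟩ := exists_Lam_le hν
  refine tendsto_of_tendsto_of_tendsto_of_le_of_le' tendsto_const_nhds
    (tendsto_add_mul_sub_rpow (mul_pos two_pos hν.1) π _ K) ?_ ?_
  · filter_upwards [Ioo_mem_nhdsLT pi_pos] with R hR using le_Lam hν hR
  · filter_upwards [Ioo_mem_nhdsLT (show 5 * π / 6 < π by linarith [pi_pos])] with R hR
    exact hK R hR
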